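/- arXiv:hep-th/9607234 — 2 statements merged into one kernel-verified Lean document; each statement's English description precedes it below -/
import Mathlib

section
/- Let N ≥ 1, let p ≥ 2 be even, and for t = (t_1,…,t_p) ∈ ℝ^p with t_p < 0 define the one-matrix model partition function Z_N(t) := (1/N!) ∫_{ℝ^N} Δ(λ_1,…,λ_N)² exp( Σ_{a=1}^N Σ_{k=1}^p t_k λ_a^k ) dλ. Then Z_N is smooth on the open set { t ∈ ℝ^p : t_p < 0 } and satisfies the string equation (lowest Virasoro constraint L_{−1}): Σ_{k=2}^p k t_k ∂Z_N/∂t_{k−1} + N t_1 Z_N = 0. -/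
open MeasureTheory

/-- The Vandermonde product `Δ(l₁,…,l_N) = ∏_{j<i} (l_i − l_j)`. -/
noncomputable def vdm {N : ℕ} (l : Fin N → ℝ) : ℝ :=
  ∏ i : Fin N, ∏ j ∈ Finset.Ioi i, (l j - l i)

/-!
`Z_N` is, up to the factor `1 / N!`, the integral of `Δ²` against the exponential of a linear form
in the couplings `t`. Such an integral is smooth in the interior of its domain of convergence and
may be differentiated under the integral sign there: in finite dimension, `exp (δ ‖ℓ‖)` is bounded
by a finite sum of exponentials `exp (ℓ u)` with `u` of size `O(δ)`, so finitely many nearby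
convergent integrals dominate all the derivatives. The half-space `t_p < 0` lies in that domain,
because a polynomial of even degree with negative leading coefficient is confining.

For the string equation, write `V` for the potential `∑ t_k X ^ k`. The vector field
`∑_a ∂/∂λ_a` annihilates `Δ²` and multiplies `exp (∑ V(λ_a))` by `∑ V'(λ_a)`. As the integral of a
total derivative vanishes, so does `∑_k k t_k ⟨∑_a λ_a ^ (k - 1)⟩`; its term with `k = 1` is
`N t_1 Z_N`, and the others are the derivatives of `Z_N` in `t_{k-1}`.
-/

open Filter Topology
open scoped Polynomial ContDiff

section ConfiningPotential

theorem tendsto_eval_cocompact_atBot {V : ℝ[X]} (hdeg : 0 < V.degree) (heven : Even V.natDegree)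
    (hlead : V.leadingCoeff < 0) : Tendsto V.eval (cocompact ℝ) atBot := by
  rw [cocompact_eq_atBot_atTop, tendsto_sup]
  refine ⟨?_, V.tendsto_atBot_of_leadingCoeff_nonpos hdeg hlead.le⟩
  have hneg : Tendsto (V.comp (-Polynomial.X)).eval atTop atBot := by
    refine Polynomial.tendsto_atBot_of_leadingCoeff_nonpos _ (by simpa using hdeg) ?_
    simpa [heven.neg_one_pow] using hlead.le
  simpa [Function.comp_def] using hneg.comp tendsto_neg_atBot_atTop

variable {V : ℝ[X]} (hV : Tendsto V.eval (cocompact ℝ) atBot)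
include hV

theorem tendsto_eval_mul_exp_eval_cocompact (Q : ℝ[X]) :
    Tendsto (fun x => Q.eval x * Real.exp (V.eval x)) (cocompact ℝ) (𝓝 0) := by
  have hnonconst : 0 < V.natDegree := by
    refine Nat.pos_of_ne_zero fun h => ?_
    obtain ⟨c, rfl⟩ := Polynomial.natDegree_eq_zero.1 h
    simp only [Polynomial.eval_C] at hV
    exact not_tendsto_const_atBot c _ hV
  have hQ : Q.eval =O[cocompact ℝ] ((-V) ^ Q.natDegree).eval := by
    rw [← Metric.cobounded_eq_cocompact]
    refine Polynomial.isBigO_cobounded_of_degree_le (Polynomial.degree_le_natDegree.trans ?_)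
    have hV_ne : -V ≠ 0 := neg_ne_zero.2 (Polynomial.ne_zero_of_natDegree_gt hnonconst)
    rw [Polynomial.degree_eq_natDegree (pow_ne_zero _ hV_ne), Polynomial.natDegree_pow,
      Polynomial.natDegree_neg]
    exact_mod_cast Nat.le_mul_of_pos_right _ hnonconst
  have hpow : Tendsto (fun x => ((-V) ^ Q.natDegree).eval x * Real.exp (V.eval x))
      (cocompact ℝ) (𝓝 0) := by
    simpa [Function.comp_def] using (Real.tendsto_pow_mul_exp_neg_atTop_nhds_zero Q.natDegree).comp
      (tendsto_neg_atBot_atTop.comp hV)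
  exact (hQ.mul (Asymptotics.isBigO_refl _ _)).trans_tendsto hpow

theorem integrable_eval_mul_exp_eval (Q : ℝ[X]) :
    Integrable fun x => Q.eval x * Real.exp (V.eval x) := by
  have hcont : Continuous fun x => Q.eval x * Real.exp (V.eval x) := by fun_prop
  refine hcont.locallyIntegrable.integrable_of_isBigO_cocompact ?_
    (integrable_inv_one_add_sq.integrableAtFilter _)
  refine ((tendsto_eval_mul_exp_eval_cocompact hV (Q * (1 + Polynomial.X ^ 2))).isBigO_one ℝ |>.mul
    (Asymptotics.isBigO_refl (fun x : ℝ => (1 + x ^ 2)⁻¹) _)).congr (fun x => ?_) fun x => one_mul _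
  simp only [Polynomial.eval_mul, Polynomial.eval_add, Polynomial.eval_one, Polynomial.eval_pow,
    Polynomial.eval_X]
  field_simp

theorem integrable_exp_sum_eval_mul_eval {ι : Type*} [Fintype ι] (P : MvPolynomial ι ℝ) :
    Integrable fun x : ι → ℝ => Real.exp (∑ i, V.eval (x i)) * MvPolynomial.eval x P := by
  simp only [MvPolynomial.eval_eq', Real.exp_sum, Finset.mul_sum]
  refine integrable_finsetSum _ fun d _ => ?_
  have hprod : Integrable fun x : ι → ℝ => ∏ i, (x i ^ d i * Real.exp (V.eval (x i))) :=
    Integrable.fintype_prod (f := fun i y => y ^ d i * Real.exp (V.eval y)) fun i => by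
      simpa using integrable_eval_mul_exp_eval hV (Polynomial.X ^ d i)
  refine (hprod.const_mul (P.coeff d)).congr (ae_of_all _ fun x => ?_)
  simp only [Finset.prod_mul_distrib]
  ring

end ConfiningPotential

theorem exists_finset_exp_norm_le_sum (E : Type*) [NormedAddCommGroup E] [NormedSpace ℝ E]
    [FiniteDimensional ℝ E] :
    ∃ s : Finset E, ∀ ℓ : E →L[ℝ] ℝ, Real.exp ‖ℓ‖ ≤ ∑ v ∈ s, Real.exp (ℓ v) := by
  classical
  let b := Module.finBasis ℝ E
  obtain ⟨C, hC, hb⟩ := b.exists_opNorm_le (F := ℝ)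
  -- `‖ℓ‖` is at most the largest `|ℓ (C • b i)|`; the point `0` takes care of an empty basis.
  let s : Finset E := insert 0 (Finset.univ.image (fun i => C • b i) ∪
    Finset.univ.image (fun i => -(C • b i)))
  refine ⟨s, fun ℓ => ?_⟩
  have hpos : 0 < ∑ v ∈ s, Real.exp (ℓ v) :=
    Finset.sum_pos (fun _ _ => Real.exp_pos _) (Finset.insert_nonempty _ _)
  have hlog : ∀ v ∈ s, ℓ v ≤ Real.log (∑ v ∈ s, Real.exp (ℓ v)) := fun v hv =>
    (Real.le_log_iff_exp_le hpos).2 <|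
      Finset.single_le_sum (f := fun v => Real.exp (ℓ v)) (fun _ _ => (Real.exp_pos _).le) hv
  have hlog_nonneg : 0 ≤ Real.log (∑ v ∈ s, Real.exp (ℓ v)) := by
    simpa using hlog 0 (Finset.mem_insert_self _ _)
  rw [← Real.le_log_iff_exp_le hpos, ← mul_div_cancel₀ (Real.log _) hC.ne']
  refine hb (div_nonneg hlog_nonneg hC.le) fun i => ?_
  rw [le_div_iff₀' hC, ← abs_of_pos hC, Real.norm_eq_abs, ← abs_mul]
  have hplus := hlog (C • b i) (by simp [s])
  have hminus := hlog (-(C • b i)) (by simp [s])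
  simp only [map_neg, map_smul, smul_eq_mul] at hplus hminus
  exact abs_le'.2 ⟨hplus, hminus⟩

section Laplace

variable {α E F : Type*} [MeasurableSpace α] [NormedAddCommGroup E] [NormedSpace ℝ E]
  [NormedAddCommGroup F] [NormedSpace ℝ F]

/-- The Laplace transform of `g μ`, with the pairing between points of `α` and parameters in `E`
given by a family `φ` of linear forms. The partition function is of this shape. -/
noncomputable def laplaceIntegral (φ : α → E →L[ℝ] ℝ) (g : α → F) (μ : Measure α) (v : E) : F :=
  ∫ x, Real.exp (φ x v) • g x ∂μ

/-- The domain of convergence of `laplaceIntegral φ g μ`; outside it the integral has the junk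
value `0`. -/
def laplaceDomain (φ : α → E →L[ℝ] ℝ) (g : α → F) (μ : Measure α) : Set E :=
  {v | Integrable (fun x => Real.exp (φ x v) • g x) μ}

-- Half of the exponent `δ ‖ℓ‖` pays for moving `w` to `v`, the other half for the factor `‖ℓ‖`.
theorem norm_exp_smul_smulRight_le (ℓ : E →L[ℝ] ℝ) (y : F) {v w : E} {δ : ℝ} (hδ : 0 < δ)
    (hw : ‖w - v‖ ≤ δ / 2) :
    ‖Real.exp (ℓ w) • ℓ.smulRight y‖ ≤
      2 / δ * (Real.exp (δ * ‖ℓ‖) * ‖Real.exp (ℓ v) • y‖) := by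
  have hexp : Real.exp (ℓ w) ≤ Real.exp (δ / 2 * ‖ℓ‖) * Real.exp (ℓ v) := by
    rw [← Real.exp_add, Real.exp_le_exp]
    have hdiff : ℓ (w - v) ≤ δ / 2 * ‖ℓ‖ :=
      (le_abs_self _).trans (ℓ.le_of_opNorm_le_of_le le_rfl hw |>.trans_eq (mul_comm _ _))
    rw [map_sub] at hdiff
    linarith
  have hnorm : ‖ℓ‖ ≤ 2 / δ * Real.exp (δ / 2 * ‖ℓ‖) := by
    rw [div_mul_eq_mul_div, le_div_iff₀ hδ]
    linarith [Real.add_one_le_exp (δ / 2 * ‖ℓ‖)]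
  rw [norm_smul, norm_smul, ContinuousLinearMap.norm_smulRight_apply, Real.norm_of_nonneg
    (Real.exp_pos _).le, Real.norm_of_nonneg (Real.exp_pos _).le]
  calc Real.exp (ℓ w) * (‖ℓ‖ * ‖y‖)
      ≤ (Real.exp (δ / 2 * ‖ℓ‖) * Real.exp (ℓ v)) *
          (2 / δ * Real.exp (δ / 2 * ‖ℓ‖) * ‖y‖) := by gcongr
    _ = 2 / δ * (Real.exp (δ / 2 * ‖ℓ‖ + δ / 2 * ‖ℓ‖) * (Real.exp (ℓ v) * ‖y‖)) := by
      rw [Real.exp_add]; ring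
    _ = 2 / δ * (Real.exp (δ * ‖ℓ‖) * (Real.exp (ℓ v) * ‖y‖)) := by ring_nf

variable {φ : α → E →L[ℝ] ℝ} {g : α → F} {μ : Measure α} {v : E}

theorem integrable_of_mem_interior_laplaceDomain (hv : v ∈ interior (laplaceDomain φ g μ)) :
    Integrable (fun x => Real.exp (φ x v) • g x) μ := by
  have hmem : v ∈ laplaceDomain φ g μ := interior_subset hv
  exact hmem

variable [FiniteDimensional ℝ E] (hφ : AEStronglyMeasurable φ μ)
include hφ

theorem exists_pos_integrable_exp_norm_mul
    (hv : v ∈ interior (laplaceDomain φ g μ)) :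
    ∃ δ > 0, Integrable (fun x => Real.exp (δ * ‖φ x‖) * ‖Real.exp (φ x v) • g x‖) μ := by
  obtain ⟨s, hs⟩ := exists_finset_exp_norm_le_sum E
  have hnear : ∀ᶠ δ in 𝓝[>] (0 : ℝ), ∀ u ∈ s, v + δ • u ∈ laplaceDomain φ g μ := by
    refine (eventually_all_finset s).2 fun u _ => nhdsWithin_le_nhds ?_
    have hcont : ContinuousAt (fun δ : ℝ => v + δ • u) 0 := by fun_prop
    exact hcont (by simpa using mem_interior_iff_mem_nhds.1 hv)
  obtain ⟨δ, hmem, hδ : 0 < δ⟩ := (hnear.and self_mem_nhdsWithin).exists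
  refine ⟨δ, hδ, (integrable_finsetSum s fun u hu => (hmem u hu).norm).mono' ?_ ?_⟩
  · exact (Real.continuous_exp.comp_aestronglyMeasurable (hφ.norm.const_mul δ)).mul
      (integrable_of_mem_interior_laplaceDomain hv).aestronglyMeasurable.norm
  · refine ae_of_all _ fun x => ?_
    calc ‖Real.exp (δ * ‖φ x‖) * ‖Real.exp (φ x v) • g x‖‖
        = Real.exp ‖δ • φ x‖ * ‖Real.exp (φ x v) • g x‖ := by
          simp [norm_smul, abs_of_pos hδ]
      _ ≤ (∑ u ∈ s, Real.exp ((δ • φ x) u)) * ‖Real.exp (φ x v) • g x‖ := by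
          gcongr
          exact hs _
      _ = ∑ u ∈ s, ‖Real.exp (φ x (v + δ • u)) • g x‖ := by
          simp only [Finset.sum_mul, map_add, Real.exp_add, norm_smul, norm_mul, map_smul,
            smul_apply, Real.norm_eq_abs, Real.abs_exp]
          exact Finset.sum_congr rfl fun _ _ => by ring

theorem integrable_exp_smul_smulRight (hv : v ∈ interior (laplaceDomain φ g μ)) :
    Integrable (fun x => Real.exp (φ x v) • (φ x).smulRight (g x)) μ := by
  obtain ⟨δ, hδ, hint⟩ := exists_pos_integrable_exp_norm_mul hφ hv
  refine (hint.const_mul (2 / δ)).mono' ?_ <| ae_of_all _ fun x =>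
    norm_exp_smul_smulRight_le (φ x) (g x) hδ (by simpa using (half_pos hδ).le)
  refine ((ContinuousLinearMap.smulRightL ℝ E F).aestronglyMeasurable_comp₂ hφ
    (integrable_of_mem_interior_laplaceDomain hv).aestronglyMeasurable).congr
      (ae_of_all _ fun x => ?_)
  ext u
  exact smul_comm _ _ _

theorem hasFDerivAt_laplaceIntegral (hv : v ∈ interior (laplaceDomain φ g μ)) :
    HasFDerivAt (laplaceIntegral φ g μ)
      (∫ x, Real.exp (φ x v) • (φ x).smulRight (g x) ∂μ) v := by
  obtain ⟨δ, hδ, hint⟩ := exists_pos_integrable_exp_norm_mul hφ hv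
  refine hasFDerivAt_integral_of_dominated_of_fderiv_le (𝕜 := ℝ)
    (F' := fun w x => Real.exp (φ x w) • (φ x).smulRight (g x))
    (Metric.closedBall_mem_nhds v (half_pos hδ)) ?_ (integrable_of_mem_interior_laplaceDomain hv)
    (integrable_exp_smul_smulRight hφ hv).aestronglyMeasurable ?_ (hint.const_mul (2 / δ)) ?_
  · filter_upwards [isOpen_interior.mem_nhds hv] with w hw
      using (integrable_of_mem_interior_laplaceDomain hw).aestronglyMeasurable
  · exact ae_of_all _ fun x w hw => norm_exp_smul_smulRight_le (φ x) (g x) hδ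
      (mem_closedBall_iff_norm.1 hw)
  · refine ae_of_all _ fun x w _ => ?_
    refine ((φ x).hasFDerivAt.exp.smul_const (g x)).congr_fderiv ?_
    ext u
    simp [mul_smul]

theorem interior_laplaceDomain_subset_apply_smul (u : E) :
    interior (laplaceDomain φ g μ) ⊆ interior (laplaceDomain φ (fun x => φ x u • g x) μ) :=
  interior_maximal (fun v hv => by
    simpa using! (integrable_exp_smul_smulRight hφ hv).apply_continuousLinearMap u) isOpen_interior

theorem fderiv_laplaceIntegral_apply [CompleteSpace F]
    (hv : v ∈ interior (laplaceDomain φ g μ)) (u : E) :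
    fderiv ℝ (laplaceIntegral φ g μ) v u = laplaceIntegral φ (fun x => φ x u • g x) μ v := by
  rw [(hasFDerivAt_laplaceIntegral hφ hv).fderiv,
    ContinuousLinearMap.integral_apply (integrable_exp_smul_smulRight hφ hv)]
  rfl

theorem contDiffOn_laplaceIntegral [CompleteSpace F] :
    ContDiffOn ℝ ∞ (laplaceIntegral φ g μ) (interior (laplaceDomain φ g μ)) := by
  refine contDiffOn_infty.2 fun n => ?_
  induction n generalizing g with
  | zero =>
    exact contDiffOn_zero.2 fun v hv =>
      (hasFDerivAt_laplaceIntegral hφ hv).continuousAt.continuousWithinAt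
  | succ n ih =>
    rw [Nat.cast_succ]
    refine contDiffOn_succ_of_fderiv_apply (fun v hv =>
      (hasFDerivAt_laplaceIntegral hφ hv).differentiableAt.differentiableWithinAt) 
        (fun h => absurd h (by simp)) ?_
    refine fun u => (ih.mono (interior_laplaceDomain_subset_apply_smul hφ u)).congr fun v hv => ?_
    rw [fderivWithin_of_isOpen isOpen_interior hv, fderiv_laplaceIntegral_apply hφ hv]

end Laplace

section StringEquation

theorem integral_eq_zero_of_hasLineDerivAt {E F : Type*} [NormedAddCommGroup E] [NormedSpace ℝ E]
    [FiniteDimensional ℝ E] [MeasurableSpace E] [BorelSpace E] {μ : Measure E}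
    [μ.IsAddHaarMeasure] [NormedAddCommGroup F] [NormedSpace ℝ F] {f f' : E → F} {v : E}
    (hf : Integrable f μ) (hf' : Integrable f' μ) (h : ∀ x, HasLineDerivAt ℝ f (f' x) x v) :
    ∫ x, f' x ∂μ = 0 := by
  have hparts := integral_bilinear_hasLineDerivAt_right_eq_neg_left_of_integrable (μ := μ)
    (f := fun _ => (1 : ℝ)) (f' := fun _ => 0) (g := f) (g' := f') (v := v)
    (B := ContinuousLinearMap.lsmul ℝ ℝ (E := F)) (by simp) (by simpa using hf') (by simpa using hf)
    (fun x _ => by simpa [HasLineDerivAt] using hasDerivAt_const (0 : ℝ) (1 : ℝ)) fun x _ => h x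
  simpa using hparts

theorem hasLineDerivAt_exp_sum_eval_mul {ι : Type*} [Fintype ι] (V : ℝ[X]) {P : (ι → ℝ) → ℝ}
    (hP : ∀ (x : ι → ℝ) (c : ℝ), P (x + c • 1) = P x) (x : ι → ℝ) :
    HasLineDerivAt ℝ (fun x => Real.exp (∑ i, V.eval (x i)) * P x)
      (Real.exp (∑ i, V.eval (x i)) * ((∑ i, V.derivative.eval (x i)) * P x)) x 1 := by
  have hV (i : ι) : HasDerivAt (fun c : ℝ => V.eval (x i + c)) (V.derivative.eval (x i)) 0 := by
    simpa using (V.hasDerivAt (x i + 0)).comp_const_add (x i) 0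
  have hsum := (HasDerivAt.fun_sum fun i (_ : i ∈ Finset.univ) => hV i).exp.mul_const (P x)
  simp only [add_zero, mul_assoc] at hsum
  simpa only [HasLineDerivAt, hP, Pi.add_apply, Pi.smul_apply, Pi.one_apply, smul_eq_mul, mul_one]

theorem integral_exp_sum_eval_mul_sum_derivative_mul {ι : Type*} [Fintype ι] {V : ℝ[X]}
    (hV : Tendsto V.eval (cocompact ℝ) atBot) {P : MvPolynomial ι ℝ}
    (hP : ∀ (x : ι → ℝ) (c : ℝ), P.eval (x + c • 1) = P.eval x) :
    ∫ x : ι → ℝ, Real.exp (∑ i, V.eval (x i)) *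
      ((∑ i, V.derivative.eval (x i)) * MvPolynomial.eval x P) = 0 := by
  refine integral_eq_zero_of_hasLineDerivAt (integrable_exp_sum_eval_mul_eval hV P) ?_
    (hasLineDerivAt_exp_sum_eval_mul V hP)
  refine (integrable_exp_sum_eval_mul_eval hV
    ((∑ i, V.derivative.toMvPolynomial i) * P)).congr (ae_of_all _ fun x => ?_)
  simp

end StringEquation

section MatrixModel

variable {N p : ℕ}

/-- The one-matrix potential with couplings `t`. It has no constant term: `t k` is the coefficient
of `X ^ (k + 1)`, so that it stands for the paper's `t_{k+1}`. -/
noncomputable def couplingPotential (t : Fin p → ℝ) : ℝ[X] :=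
  ∑ k, Polynomial.C (t k) * Polynomial.X ^ ((k : ℕ) + 1)

theorem eval_couplingPotential (t : Fin p → ℝ) (y : ℝ) :
    (couplingPotential t).eval y = ∑ k, t k * y ^ ((k : ℕ) + 1) := by
  simp [couplingPotential, Polynomial.eval_finsetSum]

theorem eval_derivative_couplingPotential (t : Fin p → ℝ) (y : ℝ) :
    (couplingPotential t).derivative.eval y =
      ∑ k : Fin p, ((k : ℕ) + 1 : ℝ) * t k * y ^ (k : ℕ) := by
  simp only [couplingPotential, Polynomial.derivative_sum, Polynomial.derivative_C_mul_X_pow,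
    Polynomial.eval_finsetSum, Polynomial.eval_C_mul, Polynomial.eval_X_pow, add_tsub_cancel_right]
  exact Finset.sum_congr rfl fun k _ => by push_cast; ring

theorem coeff_couplingPotential (t : Fin p → ℝ) (k : Fin p) :
    (couplingPotential t).coeff (k + 1) = t k := by
  simp [couplingPotential, Polynomial.coeff_X_pow, ← Fin.ext_iff]

theorem natDegree_couplingPotential {t : Fin p → ℝ} {k : Fin p} (hk : (k : ℕ) + 1 = p)
    (htk : t k ≠ 0) : (couplingPotential t).natDegree = k + 1 := by
  refine Polynomial.natDegree_eq_of_le_of_coeff_ne_zero ?_ ?_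
  · exact Polynomial.natDegree_sum_le_of_forall_le _ _ fun j _ =>
      (Polynomial.natDegree_C_mul_X_pow_le _ _).trans (by omega)
  · rwa [coeff_couplingPotential]

theorem tendsto_eval_couplingPotential (hp : Even p) {t : Fin p → ℝ} {k : Fin p}
    (hk : (k : ℕ) + 1 = p) (htk : t k < 0) :
    Tendsto (couplingPotential t).eval (cocompact ℝ) atBot := by
  have hdeg := natDegree_couplingPotential hk htk.ne
  refine tendsto_eval_cocompact_atBot ?_ (by rwa [hdeg, hk]) ?_
  · rw [← Polynomial.natDegree_pos_iff_degree_pos]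
    omega
  · rwa [Polynomial.leadingCoeff, hdeg, coeff_couplingPotential]

/-- The pairing of the couplings with the power sums of the eigenvalues `x`, as a linear form in the
couplings; this presents the partition function as a `laplaceIntegral`. -/
noncomputable def powerSumForm (x : Fin N → ℝ) : (Fin p → ℝ) →L[ℝ] ℝ :=
  ∑ k : Fin p, (∑ a, x a ^ ((k : ℕ) + 1)) • ContinuousLinearMap.proj k

theorem powerSumForm_apply (x : Fin N → ℝ) (t : Fin p → ℝ) :
    powerSumForm x t = ∑ a, (couplingPotential t).eval (x a) := by
  simp only [eval_couplingPotential]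
  rw [Finset.sum_comm]
  simp [powerSumForm, Finset.mul_sum, mul_comm]

theorem powerSumForm_single (x : Fin N → ℝ) (k : Fin p) :
    powerSumForm x (Pi.single k 1) = ∑ a, x a ^ ((k : ℕ) + 1) := by
  simp [powerSumForm, Pi.single_apply]

theorem continuous_powerSumForm :
    Continuous (powerSumForm : (Fin N → ℝ) → (Fin p → ℝ) →L[ℝ] ℝ) := by
  unfold powerSumForm
  fun_prop

/-- The Vandermonde product `vdm` as a polynomial in the eigenvalues, to which the integrability
results for polynomial densities apply. -/
noncomputable def vdmPolynomial (N : ℕ) : MvPolynomial (Fin N) ℝ :=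
  ∏ i : Fin N, ∏ j ∈ Finset.Ioi i, (MvPolynomial.X j - MvPolynomial.X i)

theorem eval_vdmPolynomial (x : Fin N → ℝ) : MvPolynomial.eval x (vdmPolynomial N) = vdm x := by
  simp [vdmPolynomial, vdm]

theorem vdm_add_smul_one (x : Fin N → ℝ) (c : ℝ) : vdm (x + c • 1) = vdm x := by
  simp [vdm]

/-- The unnormalised expectation of the `n`-th power sum of the eigenvalues in the matrix model with
potential `V`. -/
noncomputable def powerSumMoment (N : ℕ) (V : ℝ[X]) (n : ℕ) : ℝ :=
  ∫ x : Fin N → ℝ, Real.exp (∑ a, V.eval (x a)) * ((∑ a, x a ^ n) * vdm x ^ 2)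

theorem integrable_exp_sum_eval_mul_powerSum_mul {V : ℝ[X]}
    (hV : Tendsto V.eval (cocompact ℝ) atBot) (n : ℕ) :
    Integrable fun x : Fin N → ℝ =>
      Real.exp (∑ a, V.eval (x a)) * ((∑ a, x a ^ n) * vdm x ^ 2) := by
  refine (integrable_exp_sum_eval_mul_eval hV
    (MvPolynomial.psum (Fin N) ℝ n * vdmPolynomial N ^ 2)).congr (ae_of_all _ fun x => ?_)
  simp [MvPolynomial.psum, eval_vdmPolynomial]

theorem sum_mul_powerSumMoment_eq_zero {t : Fin p → ℝ}
    (ht : Tendsto (couplingPotential t).eval (cocompact ℝ) atBot) :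
    ∑ k : Fin p, ((k : ℕ) + 1 : ℝ) * t k * powerSumMoment N (couplingPotential t) k = 0 := by
  have hstring := integral_exp_sum_eval_mul_sum_derivative_mul ht (P := vdmPolynomial N ^ 2)
    fun x c => by simp only [map_pow, eval_vdmPolynomial, vdm_add_smul_one]
  simp only [map_pow, eval_vdmPolynomial, eval_derivative_couplingPotential] at hstring
  simp only [powerSumMoment, ← integral_const_mul]
  rw [← integral_finsetSum _ fun (k : Fin p) _ =>
    (integrable_exp_sum_eval_mul_powerSum_mul (N := N) ht k).const_mul (((k : ℕ) + 1 : ℝ) * t k),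
    ← hstring]
  congr 1 with x
  rw [Finset.sum_comm, Finset.sum_mul, Finset.mul_sum]
  exact Finset.sum_congr rfl fun k _ => by rw [← Finset.mul_sum]; ring

/-- The partition function of the one-matrix model without its prefactor `1 / N!`, as a function of
the couplings. -/
noncomputable def matrixIntegral (N p : ℕ) : (Fin p → ℝ) → ℝ :=
  laplaceIntegral powerSumForm (fun x : Fin N → ℝ => vdm x ^ 2) volume

theorem matrixIntegral_apply (t : Fin p → ℝ) : matrixIntegral N p t =
    ∫ x : Fin N → ℝ, vdm x ^ 2 * Real.exp (∑ a, ∑ k : Fin p, t k * x a ^ ((k : ℕ) + 1)) := by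
  simp only [matrixIntegral, laplaceIntegral, powerSumForm_apply, eval_couplingPotential,
    smul_eq_mul, mul_comm]

theorem powerSumMoment_zero (t : Fin p → ℝ) :
    powerSumMoment N (couplingPotential t) 0 = N * matrixIntegral N p t := by
  simp [powerSumMoment, matrixIntegral, laplaceIntegral, powerSumForm_apply, mul_left_comm,
    integral_const_mul]

theorem subset_interior_laplaceDomain (hp : Even p) {k : Fin p} (hk : (k : ℕ) + 1 = p) :
    {t : Fin p → ℝ | t k < 0} ⊆
      interior (laplaceDomain powerSumForm (fun x : Fin N → ℝ => vdm x ^ 2) volume) := by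
  refine interior_maximal (fun t ht => ?_) (isOpen_lt (continuous_apply k) continuous_const)
  refine (integrable_exp_sum_eval_mul_eval (tendsto_eval_couplingPotential hp hk ht)
    (vdmPolynomial N ^ 2)).congr (ae_of_all _ fun x => ?_)
  simp [powerSumForm_apply, eval_vdmPolynomial]

theorem contDiffOn_matrixIntegral (hp : Even p) {k : Fin p} (hk : (k : ℕ) + 1 = p) :
    ContDiffOn ℝ ∞ (matrixIntegral N p) {t | t k < 0} :=
  (contDiffOn_laplaceIntegral continuous_powerSumForm.aestronglyMeasurable).mono
    (subset_interior_laplaceDomain hp hk)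

theorem fderiv_matrixIntegral_single (hp : Even p) {k : Fin p} (hk : (k : ℕ) + 1 = p)
    {t : Fin p → ℝ} (ht : t k < 0) (j : Fin p) :
    fderiv ℝ (matrixIntegral N p) t (Pi.single j 1) =
      powerSumMoment N (couplingPotential t) (j + 1) := by
  rw [matrixIntegral, fderiv_laplaceIntegral_apply continuous_powerSumForm.aestronglyMeasurable
    (subset_interior_laplaceDomain hp hk ht)]
  simp only [laplaceIntegral, powerSumForm_single]
  simp only [powerSumForm_apply, smul_eq_mul, powerSumMoment]

theorem string_equation_matrixIntegral (hp : Even p) {k : Fin p} (hk : (k : ℕ) + 1 = p)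
    {t : Fin p → ℝ} (ht : t k < 0) :
    (∑ i ∈ Finset.univ.filter (fun i : Fin p => (i : ℕ) ≠ 0),
        ((i : ℕ) + 1 : ℝ) * t i *
          fderiv ℝ (matrixIntegral N p) t
            (Pi.single ⟨(i : ℕ) - 1, lt_of_le_of_lt (Nat.sub_le _ _) i.isLt⟩ 1)) +
      (N : ℝ) * t ⟨0, by omega⟩ * matrixIntegral N p t = 0 := by
  have hzero : Finset.univ.filter (fun i : Fin p => ¬(i : ℕ) ≠ 0) = {⟨0, by omega⟩} := by
    ext i
    simp [Fin.ext_iff]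
  have hmoments := sum_mul_powerSumMoment_eq_zero (N := N) (tendsto_eval_couplingPotential hp hk ht)
  rw [← Finset.sum_filter_add_sum_filter_not _ (fun i : Fin p => (i : ℕ) ≠ 0), hzero,
    Finset.sum_singleton, powerSumMoment_zero] at hmoments
  rw [← hmoments]
  congr 1
  · refine Finset.sum_congr rfl fun i hi => ?_
    rw [fderiv_matrixIntegral_single hp hk ht,
      Nat.sub_add_cancel (Nat.pos_of_ne_zero (Finset.mem_filter.1 hi).2)]
  · simp only [Nat.cast_zero]
    ring

end MatrixModel

theorem stmt15 (N p : ℕ) (hN : 1 ≤ N) (hp : 2 ≤ p) (hpe : Even p)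
    (Z : (Fin p → ℝ) → ℝ)
    (hZ : ∀ t, Z t = (1 / (N.factorial : ℝ)) *
      ∫ lam : Fin N → ℝ, (vdm lam) ^ 2 *
        Real.exp (∑ a : Fin N, ∑ k : Fin p, t k * lam a ^ ((k : ℕ) + 1))) :
    ContDiffOn ℝ (⊤ : ℕ∞) Z { t : Fin p → ℝ | t ⟨p - 1, by omega⟩ < 0 } ∧
    ∀ t : Fin p → ℝ, t ⟨p - 1, by omega⟩ < 0 →
      (∑ i ∈ Finset.univ.filter (fun i : Fin p => (i : ℕ) ≠ 0),
          ((i : ℕ) + 1 : ℝ) * t i *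
            fderiv ℝ Z t
              (Pi.single ⟨(i : ℕ) - 1, lt_of_le_of_lt (Nat.sub_le _ _) i.isLt⟩ 1)) +
        (N : ℝ) * t ⟨0, by omega⟩ * Z t = 0 := by
  have hlast : p - 1 + 1 = p := by omega
  obtain rfl : Z = (1 / (N.factorial : ℝ)) • matrixIntegral N p := by
    ext t
    rw [hZ t, Pi.smul_apply, matrixIntegral_apply, smul_eq_mul]
  refine ⟨contDiffOn_const.smul (contDiffOn_matrixIntegral hpe hlast), fun t ht => ?_⟩
  simp only [fderiv_const_smul_field, smul_apply, Pi.smul_apply, smul_eq_mul,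
    mul_left_comm _ (1 / (N.factorial : ℝ)), ← Finset.mul_sum, ← mul_add]
  rw [string_equation_matrixIntegral hpe hlast ht, mul_zero]
end

section
/- Let N ≥ 1, let p ≥ 2 be even, and for t = (t_1,…,t_p) ∈ ℝ^p with t_p < 0 define Z_N(t) := (1/N!) ∫_{ℝ^N} Δ(λ_1,…,λ_N)² exp( Σ_{a=1}^N Σ_{k=1}^p t_k λ_a^k ) dλ, and for m ≥ 0 the power-sum insertion G_m(t) := (1/N!) ∫_{ℝ^N} ( Σ_{a=1}^N λ_a^m ) Δ(λ_1,…,λ_N)² exp( Σ_{a=1}^N Σ_{k=1}^p t_k λ_a^k ) dλ (so G_m = ∂Z_N/∂t_m for 1 ≤ m ≤ p). Then for every integer s with 1 ≤ s ≤ p and every t with t_p < 0, the Virasoro constraint L_s holds: Σ_{k=1}^p k t_k G_{k+s}(t) + 2N ∂Z_N/∂t_s (t) + Σ_{a=1}^{s−1} ∂²Z_N/∂t_a ∂t_{s−a} (t) = 0. -/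
open MeasureTheory

/-!
The constraint `L_s` is the Schwinger–Dyson equation of the vector field `∑ₐ λₐ^(s+1) ∂/∂λₐ`: the
integral of the divergence of `λₐ^(s+1) Δ² exp W` vanishes. On the exponent `W = ∑ₖ tₖ pₖ` the field
acts by `pₖ ↦ k pₖ₊ₛ`. On the Vandermonde product it multiplies `Δ` by
`∑_{a<b} (λ_b^(s+1) - λₐ^(s+1)) / (λ_b - λₐ)`, a sum of complete homogeneous polynomials
`h_s(λ_b, λₐ)`; twice this sum plus the diagonal terms `(s + 1) λₐ^s = h_s(λₐ, λₐ)` coming from the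
divergence of the field itself is `∑_{c+d=s} p_c p_d`. The two terms with `c = 0` or `d = 0`
contribute `2 N p_s`, and every remaining insertion of `pₖ` is a derivative in `tₖ`.
-/

namespace MatrixModel

open Finset MvPolynomial Filter Topology

section Homogeneous

variable {A : Type*} [CommSemiring A]

/-- The complete homogeneous symmetric polynomial `h_s(x, y) = ∑_{c+d=s} x^c y^d` in two variables,
evaluated in a commutative semiring; it is the division-free form of
`(x^(s+1) - y^(s+1)) / (x - y)`. -/
def hsymm₂ (s : ℕ) (x y : A) : A :=
  ∑ c ∈ antidiagonal s, x ^ c.1 * y ^ c.2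

theorem hsymm₂_comm (s : ℕ) (x y : A) : hsymm₂ s x y = hsymm₂ s y x := by
  unfold hsymm₂
  rw [← Nat.sum_antidiagonal_swap]
  exact sum_congr rfl fun c _ => mul_comm _ _

theorem hsymm₂_self (s : ℕ) (x : A) : hsymm₂ s x x = (s + 1) * x ^ s := by
  have h : ∀ c ∈ antidiagonal s, x ^ c.1 * x ^ c.2 = x ^ s := fun c hc => by
    rw [← pow_add, mem_antidiagonal.1 hc]
  simp [hsymm₂, sum_congr rfl h]

theorem sub_mul_hsymm₂ {A : Type*} [CommRing A] (s : ℕ) (x y : A) :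
    (x - y) * hsymm₂ s x y = x ^ (s + 1) - y ^ (s + 1) := by
  rw [hsymm₂, Nat.sum_antidiagonal_eq_sum_range_succ_mk, ← (Commute.all x y).mul_geom_sum₂,
    Nat.add_sub_cancel]

theorem sum_sum_hsymm₂ {ι : Type*} [Fintype ι] (s : ℕ) (v : ι → A) :
    ∑ i, ∑ j, hsymm₂ s (v i) (v j) =
      ∑ c ∈ antidiagonal s, (∑ i, v i ^ c.1) * ∑ j, v j ^ c.2 := by
  simp only [hsymm₂, sum_mul_sum]
  rw [sum_congr rfl fun i _ => sum_comm, sum_comm]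

theorem two_mul_sum_Ioi_hsymm₂_add {ι : Type*} [Fintype ι] [LinearOrder ι]
    [LocallyFiniteOrderTop ι] [LocallyFiniteOrderBot ι] (s : ℕ) (v : ι → A) :
    2 * ∑ i, ∑ j ∈ Ioi i, hsymm₂ s (v j) (v i) + ∑ i, hsymm₂ s (v i) (v i) =
      ∑ i, ∑ j, hsymm₂ s (v i) (v j) := by
  have off_diag : 2 * ∑ i, ∑ j ∈ Ioi i, hsymm₂ s (v j) (v i) =
      ∑ i, ∑ j ∈ {i}ᶜ, hsymm₂ s (v i) (v j) := by
    rw [← sum_sum_Ioi_add_eq_sum_sum_off_diag fun j i => hsymm₂ s (v i) (v j)]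
    simp only [mul_sum, two_mul]
    exact sum_congr rfl fun i _ => sum_congr rfl fun j _ => by rw [hsymm₂_comm s (v i)]
  rw [off_diag, ← sum_add_distrib]
  exact sum_congr rfl fun i _ => by rw [Fintype.sum_eq_add_sum_compl i, add_comm]

end Homogeneous

section Derivation

theorem derivation_prod_eq_prod_mul_sum {R A ι : Type*} [CommSemiring R] [CommSemiring A]
    [Algebra R A] (E : Derivation R A A) (s : Finset ι) {f g : ι → A}
    (h : ∀ i ∈ s, E (f i) = f i * g i) :
    E (∏ i ∈ s, f i) = (∏ i ∈ s, f i) * ∑ i ∈ s, g i := by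
  induction s using Finset.cons_induction with
  | empty => simp
  | cons a s ha ih =>
    rw [prod_cons, sum_cons, Derivation.leibniz, ih fun i hi => h i (mem_cons_of_mem hi),
      h a (mem_cons_self a s), smul_eq_mul, smul_eq_mul]
    ring

theorem derivation_det_vandermonde {R A : Type*} [CommSemiring R] [CommRing A] [Algebra R A]
    (E : Derivation R A A) {s N : ℕ} {v : Fin N → A} (hv : ∀ i, E (v i) = v i ^ (s + 1)) :
    E (Matrix.vandermonde v).det =
      (Matrix.vandermonde v).det * ∑ i, ∑ j ∈ Ioi i, hsymm₂ s (v j) (v i) := by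
  rw [Matrix.det_vandermonde]
  refine derivation_prod_eq_prod_mul_sum E _ fun i _ =>
    derivation_prod_eq_prod_mul_sum E _ fun j _ => ?_
  rw [map_sub, hv, hv, sub_mul_hsymm₂]

variable {ι R : Type*} [Fintype ι] [CommSemiring R]

theorem mkDerivation_eq_sum_pderiv (f : ι → MvPolynomial ι R) (Q : MvPolynomial ι R) :
    mkDerivation R f Q = ∑ i, f i * pderiv i Q := by
  classical
  have sum_apply (P : MvPolynomial ι R) :
      (∑ i, f i • pderiv i : Derivation R (MvPolynomial ι R) (MvPolynomial ι R)) P =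
        ∑ i, f i * pderiv i P := by
    rw [← Derivation.coeFnAddMonoidHom_apply, map_sum, Finset.sum_apply]
    rfl
  have h : mkDerivation R f = ∑ i, f i • pderiv i :=
    derivation_ext fun j => by simp [sum_apply, mkDerivation_X, pderiv_X, Pi.single_apply]
  rw [h, sum_apply]

theorem sum_pderiv_mul (f : ι → MvPolynomial ι R) (Q : MvPolynomial ι R) :
    ∑ i, pderiv i (f i * Q) = (∑ i, pderiv i (f i)) * Q + mkDerivation R f Q := by
  simp only [mkDerivation_eq_sum_pderiv, pderiv_mul, sum_add_distrib, sum_mul]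

/-- The polynomial vector field `∑ᵢ Xᵢ^(s+1) ∂ᵢ`, which represents the generator `L_s` of the Witt
algebra. -/
noncomputable def wittDerivation (ι R : Type*) [CommSemiring R] (s : ℕ) :
    Derivation R (MvPolynomial ι R) (MvPolynomial ι R) :=
  mkDerivation R fun i => X i ^ (s + 1)

theorem wittDerivation_psum_succ (s m : ℕ) :
    wittDerivation ι R s (psum ι R (m + 1)) = (m + 1) * psum ι R (m + 1 + s) := by
  simp only [psum, wittDerivation, map_sum, Derivation.leibniz_pow, mkDerivation_X, mul_sum]
  refine sum_congr rfl fun i _ => ?_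
  simp only [nsmul_eq_mul, smul_eq_mul, Nat.add_sub_cancel]
  push_cast
  ring

theorem sum_antidiagonal_psum_mul_psum (ι R : Type*) [Fintype ι] [CommSemiring R] {s : ℕ}
    (hs : 1 ≤ s) :
    ∑ c ∈ antidiagonal s, psum ι R c.1 * psum ι R c.2 =
      (2 * Fintype.card ι) • psum ι R s + ∑ a ∈ Ioo 0 s, psum ι R (s - a) * psum ι R a := by
  have range_eq : range (s + 1) = insert 0 (insert s (Ioo 0 s)) := by
    ext a
    simp only [mem_range, mem_insert, mem_Ioo]
    omega
  rw [Nat.sum_antidiagonal_eq_sum_range_succ fun c d => psum ι R c * psum ι R d,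
    range_eq, sum_insert (by simp; omega), sum_insert (by simp)]
  simp only [Nat.sub_zero, Nat.sub_self, psum_zero, nsmul_eq_mul, mul_comm (psum _ _ (_ - _))]
  push_cast
  ring

/-- The Vandermonde determinant of the variables. -/
noncomputable def vandermondePoly (N : ℕ) (R : Type*) [CommRing R] : MvPolynomial (Fin N) R :=
  (Matrix.vandermonde X).det

theorem eval_vandermondePoly {N : ℕ} (x : Fin N → ℝ) : eval x (vandermondePoly N ℝ) = vdm x := by
  simp [vandermondePoly, Matrix.det_vandermonde, vdm]

theorem sum_pderiv_X_pow_mul_vandermondePoly_sq (N : ℕ) (R : Type*) [CommRing R] (s : ℕ) :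
    ∑ i, pderiv i (X i ^ (s + 1) * vandermondePoly N R ^ 2) =
      (∑ c ∈ antidiagonal s, psum (Fin N) R c.1 * psum (Fin N) R c.2) *
        vandermondePoly N R ^ 2 := by
  have divergence : ∑ i, pderiv i (X i ^ (s + 1) : MvPolynomial (Fin N) R) =
      ∑ i, hsymm₂ s (X i) (X i) :=
    sum_congr rfl fun i _ => by rw [hsymm₂_self, pderiv_pow, pderiv_X_self]; simp
  have action : mkDerivation R (fun i => X i ^ (s + 1)) (vandermondePoly N R) =
      vandermondePoly N R * ∑ i, ∑ j ∈ Ioi i, hsymm₂ s (X j) (X i) :=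
    derivation_det_vandermonde _ fun i => mkDerivation_X R _ i
  simp only [psum]
  rw [sum_pderiv_mul, divergence, Derivation.leibniz_pow, action, ← sum_sum_hsymm₂,
    ← two_mul_sum_Ioi_hsymm₂_add]
  simp only [nsmul_eq_mul, smul_eq_mul]
  push_cast
  ring

end Derivation

section WeightedIntegral

variable {ι : Type*} [Fintype ι]

/-- The integral of the polynomial `Q` over `ℝ^ι` against the weight `exp W`. -/
noncomputable def weightedIntegral (W Q : MvPolynomial ι ℝ) : ℝ :=
  ∫ x, eval x Q * Real.exp (eval x W)

/-- The exponent `W` lies below the concave quadratic `C - b |x|²`, so that `exp W` decays at least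
like a Gaussian. The constants are explicit in order to express uniformity over a family of
exponents. -/
def HasGaussianDecay (W : MvPolynomial ι ℝ) (C b : ℝ) : Prop :=
  0 < b ∧ ∀ x, eval x W ≤ C - b * ∑ i, x i ^ 2

theorem integrable_eval_mul_gaussian (Q : MvPolynomial ι ℝ) (C : ℝ) {b : ℝ} (hb : 0 < b) :
    Integrable fun x : ι → ℝ => eval x Q * Real.exp (C - b * ∑ i, x i ^ 2) := by
  induction Q using MvPolynomial.induction_on' with
  | monomial u r =>
    have one_variable (i : ι) : Integrable fun x : ℝ => x ^ u i * Real.exp (-b * x ^ 2) := by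
      simpa only [Real.rpow_natCast] using
        integrable_rpow_mul_exp_neg_mul_sq hb (neg_one_lt_zero.trans_le (u i).cast_nonneg)
    have h := (Integrable.fintype_prod one_variable).const_mul (r * Real.exp C)
    refine h.congr (.of_forall fun x => ?_)
    simp only [eval_monomial, prod_mul_distrib, Finsupp.prod_fintype, pow_zero, implies_true,
      ← Real.exp_sum, sub_eq_add_neg, Real.exp_add, mul_sum, neg_mul, sum_neg_distrib]
    ring
  | add P Q hP hQ =>
    simp only [map_add, add_mul]
    exact hP.add hQ

theorem continuous_eval_mul_exp_eval {ι : Type*} (W Q : MvPolynomial ι ℝ) :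
    Continuous fun x => eval x Q * Real.exp (eval x W) :=
  (MvPolynomial.continuous_eval Q).mul (MvPolynomial.continuous_eval W).rexp

theorem HasGaussianDecay.norm_le {W : MvPolynomial ι ℝ} {C b : ℝ} (hW : HasGaussianDecay W C b)
    (Q : MvPolynomial ι ℝ) (x : ι → ℝ) :
    ‖eval x Q * Real.exp (eval x W)‖ ≤ ‖eval x Q * Real.exp (C - b * ∑ i, x i ^ 2)‖ := by
  simp only [norm_mul, Real.norm_eq_abs, Real.abs_exp]
  gcongr
  exact hW.2 x

theorem HasGaussianDecay.integrable {W : MvPolynomial ι ℝ} {C b : ℝ}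
    (hW : HasGaussianDecay W C b) (Q : MvPolynomial ι ℝ) :
    Integrable fun x => eval x Q * Real.exp (eval x W) :=
  (integrable_eval_mul_gaussian Q C hW.1).mono
    (continuous_eval_mul_exp_eval W Q).aestronglyMeasurable (.of_forall (hW.norm_le Q))

theorem HasGaussianDecay.isLinearMap_weightedIntegral {W : MvPolynomial ι ℝ} {C b : ℝ}
    (hW : HasGaussianDecay W C b) : IsLinearMap ℝ (weightedIntegral W) where
  map_add P Q := by
    simp only [weightedIntegral, map_add, add_mul]
    exact integral_add (hW.integrable P) (hW.integrable Q)
  map_smul r Q := by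
    simp only [weightedIntegral, smul_eval, smul_eq_mul, mul_assoc]
    exact integral_const_mul r _

theorem hasFDerivAt_eval (Q : MvPolynomial ι ℝ) (x : ι → ℝ) :
    HasFDerivAt (fun x => eval x Q)
      (∑ i, eval x (pderiv i Q) • (ContinuousLinearMap.proj i : (ι → ℝ) →L[ℝ] ℝ)) x := by
  classical
  induction Q using MvPolynomial.induction_on with
  | C r => simpa using hasFDerivAt_const r x
  | add P Q hP hQ =>
    simp only [map_add, add_smul, sum_add_distrib]
    exact hP.add hQ
  | mul_X P j hP =>
    have h := hP.mul (hasFDerivAt_apply (𝕜 := ℝ) j x)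
    simp only [map_mul, eval_X]
    refine h.congr_fderiv ?_
    simp [pderiv_X, Pi.single_apply, add_smul, sum_add_distrib, smul_sum, mul_smul,
      smul_comm (x j), apply_ite (eval x)]

theorem HasGaussianDecay.weightedIntegral_pderiv_add {W : MvPolynomial ι ℝ} {C b : ℝ}
    (hW : HasGaussianDecay W C b) (Q : MvPolynomial ι ℝ) (i : ι) :
    weightedIntegral W (pderiv i Q + Q * pderiv i W) = 0 := by
  classical
  have h := integral_bilinear_hasFDerivAt_right_eq_neg_left_of_integrable (μ := volume)
    (v := (Pi.single i 1 : ι → ℝ)) (B := ContinuousLinearMap.mul ℝ ℝ)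
    (f := fun x => eval x Q) (g := fun x => Real.exp (eval x W))
    (by simpa [Pi.single_apply] using hW.integrable (pderiv i Q))
    (by simpa [Pi.single_apply, mul_assoc, mul_comm, mul_left_comm]
          using hW.integrable (Q * pderiv i W))
    (hW.integrable Q)
    (fun x _ => hasFDerivAt_eval Q x) (fun x _ => (hasFDerivAt_eval W x).exp)
  rw [hW.isLinearMap_weightedIntegral.map_add, add_comm, add_eq_zero_iff_eq_neg]
  simpa [weightedIntegral, Pi.single_apply, mul_assoc, mul_comm, mul_left_comm] using h

theorem HasGaussianDecay.weightedIntegral_divergence {W : MvPolynomial ι ℝ} {C b : ℝ}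
    (hW : HasGaussianDecay W C b) (f : ι → MvPolynomial ι ℝ) (Q : MvPolynomial ι ℝ) :
    weightedIntegral W (∑ i, pderiv i (f i * Q) + mkDerivation ℝ f W * Q) = 0 := by
  have h : ∑ i, pderiv i (f i * Q) + mkDerivation ℝ f W * Q =
      ∑ i, (pderiv i (f i * Q) + f i * Q * pderiv i W) := by
    rw [mkDerivation_eq_sum_pderiv, sum_mul, ← sum_add_distrib]
    exact sum_congr rfl fun i _ => by ring
  rw [h, ← hW.isLinearMap_weightedIntegral.mk'_apply, map_sum]
  exact sum_eq_zero fun i _ => hW.weightedIntegral_pderiv_add (f i * Q) i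

theorem HasGaussianDecay.loop_equation {N : ℕ} {W : MvPolynomial (Fin N) ℝ} {C b : ℝ}
    (hW : HasGaussianDecay W C b) (s : ℕ) :
    weightedIntegral W ((∑ c ∈ antidiagonal s, psum (Fin N) ℝ c.1 * psum (Fin N) ℝ c.2 +
      wittDerivation (Fin N) ℝ s W) * vandermondePoly N ℝ ^ 2) = 0 := by
  rw [add_mul, ← sum_pderiv_X_pow_mul_vandermondePoly_sq]
  exact hW.weightedIntegral_divergence _ _

/-- The exponent `∑ₖ tₖ Pₖ` with coupling constants `t`. -/
noncomputable def linearExponent {ι κ : Type*} [Fintype κ] (P : κ → MvPolynomial ι ℝ)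
    (t : κ → ℝ) : MvPolynomial ι ℝ :=
  ∑ k, t k • P k

theorem eval_linearExponent {ι κ : Type*} [Fintype κ] (P : κ → MvPolynomial ι ℝ) (t : κ → ℝ)
    (x : ι → ℝ) : eval x (linearExponent P t) = ∑ k, t k * eval x (P k) := by
  simp [linearExponent]

theorem hasFDerivAt_eval_mul_exp_eval_linearExponent {ι κ : Type*} [Fintype κ]
    (P : κ → MvPolynomial ι ℝ) (Q : MvPolynomial ι ℝ) (x : ι → ℝ) (t : κ → ℝ) :
    HasFDerivAt (fun t : κ → ℝ => eval x Q * Real.exp (eval x (linearExponent P t)))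
      (∑ k, (eval x (P k * Q) * Real.exp (eval x (linearExponent P t))) •
        (ContinuousLinearMap.proj k : (κ → ℝ) →L[ℝ] ℝ)) t := by
  have exponent : HasFDerivAt (fun t : κ → ℝ => eval x (linearExponent P t))
      (∑ k, eval x (P k) • (ContinuousLinearMap.proj k : (κ → ℝ) →L[ℝ] ℝ)) t := by
    simp only [eval_linearExponent]
    exact HasFDerivAt.fun_sum fun k _ => (hasFDerivAt_apply (𝕜 := ℝ) k t).mul_const _
  refine (exponent.exp.const_mul (eval x Q)).congr_fderiv ?_
  simp only [smul_sum, smul_smul, map_mul]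
  exact sum_congr rfl fun k _ => by congr 1; ring

theorem HasGaussianDecay.norm_sum_smul_proj_le {κ : Type*} [Fintype κ] {W : MvPolynomial ι ℝ}
    {C b : ℝ} (hW : HasGaussianDecay W C b) (Q : κ → MvPolynomial ι ℝ) (x : ι → ℝ) :
    ‖∑ k, (eval x (Q k) * Real.exp (eval x W)) •
        (ContinuousLinearMap.proj k : (κ → ℝ) →L[ℝ] ℝ)‖ ≤
      ∑ k, ‖eval x (Q k) * Real.exp (C - b * ∑ i, x i ^ 2)‖ := by
  refine norm_sum_le_of_le _ fun k _ => ?_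
  have norm_proj : ‖(ContinuousLinearMap.proj k : (κ → ℝ) →L[ℝ] ℝ)‖ ≤ 1 :=
    ContinuousLinearMap.opNorm_le_bound _ zero_le_one fun y => by
      simpa using norm_le_pi_norm y k
  rw [norm_smul]
  exact (mul_le_of_le_one_right (norm_nonneg _) norm_proj).trans (hW.norm_le _ x)

theorem hasFDerivAt_weightedIntegral {κ : Type*} [Fintype κ] (P : κ → MvPolynomial ι ℝ)
    {t : κ → ℝ} {C b : ℝ} (h : ∀ᶠ t' in 𝓝 t, HasGaussianDecay (linearExponent P t') C b)
    (Q : MvPolynomial ι ℝ) :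
    HasFDerivAt (fun t => weightedIntegral (linearExponent P t) Q)
      (∑ k, weightedIntegral (linearExponent P t) (P k * Q) •
        (ContinuousLinearMap.proj k : (κ → ℝ) →L[ℝ] ℝ)) t := by
  have decay : HasGaussianDecay (linearExponent P t) C b := h.self_of_nhds
  have integrable_smul (k : κ) : Integrable fun x =>
      (eval x (P k * Q) * Real.exp (eval x (linearExponent P t))) •
        (ContinuousLinearMap.proj k : (κ → ℝ) →L[ℝ] ℝ) :=
    (decay.integrable (P k * Q)).smul_const _
  have continuous_fderiv : Continuous fun x =>
      ∑ k, (eval x (P k * Q) * Real.exp (eval x (linearExponent P t))) •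
        (ContinuousLinearMap.proj k : (κ → ℝ) →L[ℝ] ℝ) :=
    continuous_finsetSum _ fun k _ => (continuous_eval_mul_exp_eval _ _).smul continuous_const
  have integral_fderiv :
      ∫ x, ∑ k, (eval x (P k * Q) * Real.exp (eval x (linearExponent P t))) •
        (ContinuousLinearMap.proj k : (κ → ℝ) →L[ℝ] ℝ) =
      ∑ k, weightedIntegral (linearExponent P t) (P k * Q) • ContinuousLinearMap.proj k := by
    rw [integral_finsetSum _ fun k _ => integrable_smul k]
    exact sum_congr rfl fun k _ => integral_smul_const _ _
  rw [← integral_fderiv]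
  exact hasFDerivAt_integral_of_dominated_of_fderiv_le h
    (F' := fun t x => ∑ k, (eval x (P k * Q) * Real.exp (eval x (linearExponent P t))) •
      (ContinuousLinearMap.proj k : (κ → ℝ) →L[ℝ] ℝ))
    (.of_forall fun t' => (continuous_eval_mul_exp_eval _ Q).aestronglyMeasurable)
    (decay.integrable Q) continuous_fderiv.aestronglyMeasurable
    (.of_forall fun x t' ht' =>
      HasGaussianDecay.norm_sum_smul_proj_le ht' (fun k => P k * Q) x)
    (integrable_finsetSum _ fun k _ =>
      (integrable_eval_mul_gaussian (P k * Q) C decay.1).norm)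
    (.of_forall fun x t' _ => hasFDerivAt_eval_mul_exp_eval_linearExponent P Q x t')

end WeightedIntegral

section Potential

theorem exists_mul_pow_le_add_mul_pow {F : Type*} [Field F] [LinearOrder F]
    [IsStrictOrderedRing F] (K : F) {m p : ℕ} (hmp : m < p) {ε : F} (hε : 0 < ε) :
    ∃ C, ∀ r, 0 ≤ r → K * r ^ m ≤ C + ε * r ^ p := by
  let R := max 1 (K / ε)
  refine ⟨|K| * R ^ m, fun r hr => ?_⟩
  rcases le_total r R with small | large
  · calc K * r ^ m ≤ |K| * R ^ m := by gcongr; exact le_abs_self K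
      _ ≤ |K| * R ^ m + ε * r ^ p := le_add_of_nonneg_right (by positivity)
  · have one_le : 1 ≤ r := (le_max_left _ _).trans large
    have coeff_le : K ≤ ε * r := (div_le_iff₀' hε).1 ((le_max_right _ _).trans large)
    calc K * r ^ m ≤ ε * r * r ^ m := by gcongr
      _ = ε * r ^ (m + 1) := by ring
      _ ≤ ε * r ^ p := by gcongr; exact hmp
      _ ≤ |K| * R ^ m + ε * r ^ p := le_add_of_nonneg_left (by positivity)

theorem pow_le_one_add_pow {R : Type*} [Semiring R] [LinearOrder R] [IsOrderedRing R] {r : R}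
    (hr : 0 ≤ r) {m n : ℕ} (hmn : m ≤ n) : r ^ m ≤ 1 + r ^ n := by
  rcases le_total r 1 with h | h
  · exact (pow_le_one₀ hr h).trans (le_add_of_nonneg_right (by positivity))
  · exact (pow_le_pow_right₀ h hmn).trans (le_add_of_nonneg_left zero_le_one)

theorem exists_sum_mul_pow_le_sub_mul_sq {q : ℕ} (hq : Even (q + 1)) (K : ℝ) {c : ℝ}
    (hc : 0 < c) :
    ∃ C, ∀ t : Fin (q + 1) → ℝ, ‖t‖ ≤ K → t (Fin.last q) ≤ -c → ∀ x : ℝ,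
      ∑ k, t k * x ^ ((k : ℕ) + 1) ≤ C - c / 2 * x ^ 2 := by
  -- With this share of `c`, the `q` lower terms together cost at most half of the leading term.
  have hε : 0 < c / (2 * (q + 1)) := by positivity
  choose C hC using fun k : Fin q =>
    exists_mul_pow_le_add_mul_pow K (Nat.succ_lt_succ k.isLt) hε
  refine ⟨∑ k, C k + c / 2, fun t ht htop x => ?_⟩
  have lower_terms (k : Fin q) : t k.castSucc * x ^ ((k : ℕ) + 1) ≤
      C k + c / (2 * (q + 1)) * |x| ^ (q + 1) := by
    have coeff_le : |t k.castSucc| ≤ K := (norm_le_pi_norm t _).trans ht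
    calc t k.castSucc * x ^ ((k : ℕ) + 1) ≤ |t k.castSucc| * |x| ^ ((k : ℕ) + 1) := by
          rw [← abs_pow, ← abs_mul]
          exact le_abs_self _
      _ ≤ K * |x| ^ ((k : ℕ) + 1) := by gcongr
      _ ≤ _ := hC k |x| (abs_nonneg x)
  have top_term : t (Fin.last q) * x ^ (q + 1) ≤ -c * |x| ^ (q + 1) := by
    rw [← hq.pow_abs]
    gcongr
  have sq_le : x ^ 2 ≤ 1 + |x| ^ (q + 1) := by
    rw [← sq_abs]
    exact pow_le_one_add_pow (abs_nonneg x) (Nat.le_of_dvd q.succ_pos hq.two_dvd)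
  have total_weight_le : (q : ℝ) * (c / (2 * (q + 1))) ≤ c / 2 := by
    rw [mul_div_assoc', div_le_div_iff₀ (by positivity) two_pos]
    linarith
  calc ∑ k, t k * x ^ ((k : ℕ) + 1)
      ≤ ∑ k, (C k + c / (2 * (q + 1)) * |x| ^ (q + 1)) + -c * |x| ^ (q + 1) := by
        rw [Fin.sum_univ_castSucc]
        exact add_le_add (sum_le_sum fun k _ => lower_terms k) top_term
    _ = ∑ k, C k + q * (c / (2 * (q + 1))) * |x| ^ (q + 1) - c * |x| ^ (q + 1) := by
        simp only [sum_add_distrib, sum_const, card_univ, Fintype.card_fin, nsmul_eq_mul]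
        ring
    _ ≤ ∑ k, C k + c / 2 * |x| ^ (q + 1) - c * |x| ^ (q + 1) := by gcongr
    _ = ∑ k, C k + c / 2 - c / 2 * (1 + |x| ^ (q + 1)) := by ring
    _ ≤ ∑ k, C k + c / 2 - c / 2 * x ^ 2 := by gcongr

variable {ι : Type*} [Fintype ι]

/-- The exponent `∑ₖ tₖ pₖ` of the matrix model, `pₖ` being the power sums of the eigenvalues. The
coupling constants are indexed from zero: `t k` multiplies the power sum of degree `k + 1`. -/
noncomputable def potential (ι : Type*) [Fintype ι] {p : ℕ} (t : Fin p → ℝ) :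
    MvPolynomial ι ℝ :=
  linearExponent (fun k : Fin p => psum ι ℝ (k + 1)) t

theorem eval_potential {p : ℕ} (t : Fin p → ℝ) (x : ι → ℝ) :
    eval x (potential ι t) = ∑ a, ∑ k, t k * x a ^ ((k : ℕ) + 1) := by
  rw [potential, eval_linearExponent, sum_comm]
  simp [psum, mul_sum]

theorem wittDerivation_potential (s : ℕ) {p : ℕ} (t : Fin p → ℝ) :
    wittDerivation ι ℝ s (potential ι t) =
      ∑ k : Fin p, (((k : ℕ) + 1) * t k) • psum ι ℝ (k + 1 + s) := by
  simp only [potential, linearExponent, map_sum, Derivation.map_smul, wittDerivation_psum_succ]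
  refine sum_congr rfl fun k _ => ?_
  rw [mul_comm _ (t k), mul_smul]
  congr 1
  simp [smul_eq_C_mul]

theorem eventually_hasGaussianDecay_potential (ι : Type*) [Fintype ι] {q : ℕ}
    (hq : Even (q + 1)) {t : Fin (q + 1) → ℝ} (ht : t (Fin.last q) < 0) :
    ∃ C b, ∀ᶠ t' in 𝓝 t, HasGaussianDecay (potential ι t') C b := by
  have hc : 0 < -(t (Fin.last q) / 2) := by linarith
  obtain ⟨C, hC⟩ := exists_sum_mul_pow_le_sub_mul_sq hq (‖t‖ + 1) hc
  refine ⟨Fintype.card ι * C, -(t (Fin.last q) / 2) / 2, ?_⟩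
  have bounded : ∀ᶠ t' in 𝓝 t, ‖t'‖ < ‖t‖ + 1 :=
    continuous_norm.continuousAt.eventually_lt_const (lt_add_one _)
  have negative : ∀ᶠ t' : Fin (q + 1) → ℝ in 𝓝 t, t' (Fin.last q) < t (Fin.last q) / 2 :=
    (continuous_apply _).continuousAt.eventually_lt_const (by linarith)
  filter_upwards [bounded, negative] with t' hbdd hneg
  refine ⟨by linarith, fun x => ?_⟩
  calc eval x (potential ι t') ≤ ∑ a, (C - -(t (Fin.last q) / 2) / 2 * x a ^ 2) := by
        rw [eval_potential]
        exact sum_le_sum fun a _ => hC t' hbdd.le (by linarith) (x a)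
    _ = Fintype.card ι * C - -(t (Fin.last q) / 2) / 2 * ∑ a, x a ^ 2 := by
        rw [sum_sub_distrib, mul_sum, sum_const, card_univ, nsmul_eq_mul]

theorem exists_hasGaussianDecay_potential (ι : Type*) [Fintype ι] {q : ℕ}
    (hq : Even (q + 1)) {t : Fin (q + 1) → ℝ} (ht : t (Fin.last q) < 0) :
    ∃ C b, HasGaussianDecay (potential ι t) C b :=
  let ⟨C, b, h⟩ := eventually_hasGaussianDecay_potential ι hq ht
  ⟨C, b, h.self_of_nhds⟩

end Potential

section Correlator

/-- The unnormalized expectation of the insertion `Q` in the eigenvalue model with `N` eigenvalues,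
including the factor `1 / N!`: `correlator t 1` is the partition function `Z_N`, and `psum m` is the
insertion that gives `G_m`. -/
noncomputable def correlator {N p : ℕ} (t : Fin p → ℝ) (Q : MvPolynomial (Fin N) ℝ) : ℝ :=
  1 / N.factorial * weightedIntegral (potential (Fin N) t) (Q * vandermondePoly N ℝ ^ 2)

theorem correlator_eq_integral {N p : ℕ} (t : Fin p → ℝ) (Q : MvPolynomial (Fin N) ℝ) :
    correlator t Q = 1 / N.factorial * ∫ x : Fin N → ℝ, eval x Q * vdm x ^ 2 *
      Real.exp (∑ a, ∑ k, t k * x a ^ ((k : ℕ) + 1)) := by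
  simp [correlator, weightedIntegral, eval_vandermondePoly, eval_potential]

variable {N q : ℕ} {t : Fin (q + 1) → ℝ}

theorem isLinearMap_correlator (hq : Even (q + 1)) (ht : t (Fin.last q) < 0) :
    IsLinearMap ℝ (correlator (N := N) t) := by
  obtain ⟨C, b, decay⟩ := exists_hasGaussianDecay_potential (Fin N) hq ht
  have linear := decay.isLinearMap_weightedIntegral
  refine ⟨fun P Q => ?_, fun r Q => ?_⟩
  · rw [correlator, add_mul, linear.map_add, mul_add]
    rfl
  · rw [correlator, smul_mul_assoc, linear.map_smul, mul_smul_comm]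
    rfl

theorem fderiv_correlator (hq : Even (q + 1)) (ht : t (Fin.last q) < 0)
    (Q : MvPolynomial (Fin N) ℝ) (i : Fin (q + 1)) :
    fderiv ℝ (fun t => correlator t Q) t (Pi.single i 1) =
      correlator t (psum (Fin N) ℝ (i + 1) * Q) := by
  obtain ⟨C, b, decay⟩ := eventually_hasGaussianDecay_potential (Fin N) hq ht
  have h := (hasFDerivAt_weightedIntegral _ decay (Q * vandermondePoly N ℝ ^ 2)).const_mul
    (1 / (N.factorial : ℝ))
  rw [show fderiv ℝ (fun t => correlator t Q) t = _ from h.fderiv]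
  simp [Pi.single_apply, correlator, potential, mul_assoc]

theorem fderiv_fderiv_correlator (hq : Even (q + 1)) (ht : t (Fin.last q) < 0)
    (Q : MvPolynomial (Fin N) ℝ) (i j : Fin (q + 1)) :
    fderiv ℝ (fun t => fderiv ℝ (fun t => correlator t Q) t (Pi.single i 1)) t (Pi.single j 1) =
      correlator t (psum (Fin N) ℝ (j + 1) * (psum (Fin N) ℝ (i + 1) * Q)) := by
  have negative : ∀ᶠ t' : Fin (q + 1) → ℝ in 𝓝 t, t' (Fin.last q) < 0 :=
    (continuous_apply _).continuousAt.eventually_lt_const ht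
  have first_derivative : (fun t => fderiv ℝ (fun t => correlator t Q) t (Pi.single i 1)) =ᶠ[𝓝 t]
      fun t => correlator t (psum (Fin N) ℝ (i + 1) * Q) :=
    negative.mono fun t' ht' => fderiv_correlator hq ht' Q i
  rw [first_derivative.fderiv_eq, fderiv_correlator hq ht]

theorem virasoro_correlator (hq : Even (q + 1)) (ht : t (Fin.last q) < 0) {s : ℕ} (hs : 1 ≤ s) :
    ∑ k : Fin (q + 1), ((k : ℕ) + 1 : ℝ) * t k * correlator t (psum (Fin N) ℝ (k + 1 + s)) +
      2 * N * correlator t (psum (Fin N) ℝ s) +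
      ∑ a ∈ Ioo 0 s, correlator t (psum (Fin N) ℝ (s - a) * psum (Fin N) ℝ a) = 0 := by
  obtain ⟨C, b, decay⟩ := exists_hasGaussianDecay_potential (Fin N) hq ht
  have linear := isLinearMap_correlator (N := N) hq ht
  have loop : correlator t (∑ c ∈ antidiagonal s, psum (Fin N) ℝ c.1 * psum (Fin N) ℝ c.2 +
      wittDerivation (Fin N) ℝ s (potential (Fin N) t)) = 0 :=
    mul_eq_zero_of_right _ (decay.loop_equation s)
  rw [wittDerivation_potential, sum_antidiagonal_psum_mul_psum _ _ hs, ← linear.mk'_apply,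
    map_add, map_add, map_nsmul, map_sum, map_sum] at loop
  simp only [map_smul, IsLinearMap.mk'_apply, nsmul_eq_mul, smul_eq_mul, Fintype.card_fin] at loop
  push_cast at loop
  linarith

end Correlator

end MatrixModel

theorem stmt17 (N p : ℕ) (hN : 1 ≤ N) (hp : 2 ≤ p) (hpe : Even p)
    (Z : (Fin p → ℝ) → ℝ)
    (hZ : ∀ t, Z t = (1 / (N.factorial : ℝ)) *
      ∫ lam : Fin N → ℝ, (vdm lam) ^ 2 *
        Real.exp (∑ a : Fin N, ∑ k : Fin p, t k * lam a ^ ((k : ℕ) + 1)))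
    (G : ℕ → (Fin p → ℝ) → ℝ)
    (hG : ∀ m t, G m t = (1 / (N.factorial : ℝ)) *
      ∫ lam : Fin N → ℝ, (∑ a : Fin N, lam a ^ m) * (vdm lam) ^ 2 *
        Real.exp (∑ a : Fin N, ∑ k : Fin p, t k * lam a ^ ((k : ℕ) + 1))) :
    (∀ i : Fin p, ∀ t : Fin p → ℝ, t ⟨p - 1, by omega⟩ < 0 →
      G ((i : ℕ) + 1) t = fderiv ℝ Z t (Pi.single i 1)) ∧
    ∀ s : ℕ, 1 ≤ s → s ≤ p → ∀ t : Fin p → ℝ, t ⟨p - 1, by omega⟩ < 0 →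
      (∑ i : Fin p, ((i : ℕ) + 1 : ℝ) * t i * G ((i : ℕ) + 1 + s) t) +
        2 * (N : ℝ) * fderiv ℝ Z t
          (Pi.single ⟨min (s - 1) (p - 1), by omega⟩ 1) +
        (∑ a ∈ Finset.Ioo 0 s,
          fderiv ℝ
            (fun t' => fderiv ℝ Z t' (Pi.single ⟨min (a - 1) (p - 1), by omega⟩ 1)) t
            (Pi.single ⟨min (s - a - 1) (p - 1), by omega⟩ 1)) = 0 := by
  open MatrixModel MvPolynomial in
  obtain ⟨q, rfl⟩ : ∃ q, p = q + 1 := ⟨p - 1, by omega⟩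
  have hZ' : Z = fun t => correlator t (1 : MvPolynomial (Fin N) ℝ) :=
    funext fun t => by simp [hZ, correlator_eq_integral]
  have hG' (m : ℕ) (t : Fin (q + 1) → ℝ) : G m t = correlator t (psum (Fin N) ℝ m) := by
    simp [hG, correlator_eq_integral, psum]
  subst hZ'
  refine ⟨fun i t ht => by rw [hG', fderiv_correlator hpe ht, mul_one], fun s hs hsp t ht => ?_⟩
  rw [← virasoro_correlator (N := N) hpe ht hs]
  refine congr_arg₂ _ (congr_arg₂ _ ?_ ?_) (Finset.sum_congr rfl fun a ha => ?_)
  · exact Finset.sum_congr rfl fun k _ => by rw [hG']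
  · rw [fderiv_correlator hpe ht, mul_one]
    congr 3
    simp only
    omega
  · rw [Finset.mem_Ioo] at ha
    rw [fderiv_fderiv_correlator hpe ht, mul_one]
    congr 3 <;> simp only <;> omega
end
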